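/- Let I₁ and I₂ be two distinct SP-maximal ideals on ℝ⁺. Then there exists A ∈ I₁ such that ℝ⁺ − A ∈ I₂. -/

import Mathlib

/-!
A set `E` is strongly porous at `0` exactly when, for every ratio `q > 1`, it misses intervals
`(a, q a)` with `q a` arbitrarily small (`upperPorosity_eq_one_iff`). This property survives
replacing `E` by a blow-up (the gap only shrinks by a factor `q` at both ends) and adding a set
bounded away from `0`. By maximality, an SP-maximal ideal contains every `A` such that `A ∪ C` is
strongly porous for all `C` in the ideal (`mem_of_forall_union`); hence it is closed under
blow-ups and contains `{0} ∪ [d, ∞)`.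

If `I₁ ≠ I₂`, some `A ∈ I₂` is outside `I₁`, so `A ∪ B` is not strongly porous for some `B ∈ I₁`.
Then for some `q > 1` every interval `(x, q x)` with `x` small meets `A ∪ B`, so the blow-ups
`A(q)` and `B(q)` together cover a punctured right neighbourhood of `0`. The set
`{0} ∪ [d, ∞) ∪ B(q)` is in `I₁`, and its complement is contained in `A(q) ∈ I₂`.
-/

open Filter Set

/-- `gapLength E h` = λ(E,h): the length of the largest open subinterval of (0,h)
containing no point of `E` (0 if no such interval exists). -/
noncomputable def gapLength (E : Set ℝ) (h : ℝ) : ℝ :=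
  sSup {l : ℝ | ∃ a b : ℝ, 0 ≤ a ∧ a ≤ b ∧ b ≤ h ∧ Set.Ioo a b ∩ E = ∅ ∧ l = b - a}

/-- The right upper porosity of `E` at 0. -/
noncomputable def upperPorosity (E : Set ℝ) : ℝ :=
  Filter.limsup (fun h => gapLength E h / h) (nhdsWithin (0:ℝ) (Set.Ioi 0))

/-- The right lower porosity of `E` at 0. -/
noncomputable def lowerPorosity (E : Set ℝ) : ℝ :=
  Filter.liminf (fun h => gapLength E h / h) (nhdsWithin (0:ℝ) (Set.Ioi 0))

/-- `UMP E`: sequences of positive reals tending to 0 along which the upper limit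
in the definition of porosity is attained. -/
def UMP (E : Set ℝ) : Set (ℕ → ℝ) :=
  {h | (∀ n, 0 < h n) ∧ Filter.Tendsto h Filter.atTop (nhds 0) ∧
    Filter.Tendsto (fun n => gapLength E (h n) / h n) Filter.atTop (nhds (upperPorosity E))}

/-- The set of all strongly porous at 0 subsets of ℝ⁺. -/
def SP : Set (Set ℝ) := {E | E ⊆ Set.Ici 0 ∧ upperPorosity E = 1}

/-- `I` is an ideal on the set `X`. -/
def IsIdealOn (X : Set ℝ) (I : Set (Set ℝ)) : Prop :=
  I.Nonempty ∧ (∀ B ∈ I, B ⊆ X) ∧ (∀ B ∈ I, ∀ C : Set ℝ, C ⊆ B → C ∈ I) ∧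
    (∀ B ∈ I, ∀ C ∈ I, B ∪ C ∈ I) ∧ X ∉ I

/-- `I` is a `Γ`-maximal ideal on `X`. -/
def IsMaximalIdealIn (X : Set ℝ) (Γ I : Set (Set ℝ)) : Prop :=
  IsIdealOn X I ∧ I ⊆ Γ ∧ ∀ J : Set (Set ℝ), IsIdealOn X J → I ⊆ J → J ⊆ Γ → I = J

/-- `Î(SP)`: the intersection of all SP-maximal ideals on ℝ⁺. -/
def hatISP : Set (Set ℝ) :=
  {A | ∀ I : Set (Set ℝ), IsMaximalIdealIn (Set.Ici 0) SP I → A ∈ I}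

/-- The q-blow up `E(q)` of a set `E ⊆ ℝ⁺`. -/
def blowUp (E : Set ℝ) (q : ℝ) : Set ℝ := ⋃ x ∈ E, Set.Ioo (q⁻¹ * x) (q * x)

/-- `E` misses intervals `(a, q a)` of every ratio `q > 1` arbitrarily close to `0`. This is
equivalent to strong porosity at `0`; see `upperPorosity_eq_one_iff`. -/
def HasBigGaps (E : Set ℝ) : Prop :=
  ∀ q : ℝ, 1 < q → ∀ δ : ℝ, 0 < δ → ∃ a : ℝ, 0 < a ∧ q * a < δ ∧ ∀ x ∈ E, a < x → q * a ≤ x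

lemma HasBigGaps.mono {E F : Set ℝ} (hE : HasBigGaps E) (h : F ⊆ E) : HasBigGaps F := by
  intro q hq δ hδ
  obtain ⟨a, ha, hd, hx⟩ := hE q hq δ hδ
  exact ⟨a, ha, hd, fun x hxF => hx x (h hxF)⟩

lemma gapLength_bddAbove (E : Set ℝ) (h : ℝ) :
    BddAbove {l : ℝ | ∃ a b : ℝ, 0 ≤ a ∧ a ≤ b ∧ b ≤ h ∧ Set.Ioo a b ∩ E = ∅ ∧ l = b - a} := by
  refine ⟨h, ?_⟩
  rintro l ⟨a, b, ha, hab, hb, -, rfl⟩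
  linarith

lemma gapLength_nonempty (E : Set ℝ) {h : ℝ} (hh : 0 < h) :
    {l : ℝ | ∃ a b : ℝ, 0 ≤ a ∧ a ≤ b ∧ b ≤ h ∧ Set.Ioo a b ∩ E = ∅ ∧ l = b - a}.Nonempty :=
  ⟨0, 0, 0, le_rfl, le_rfl, hh.le, by simp, by simp⟩

lemma gapLength_nonneg (E : Set ℝ) {h : ℝ} (hh : 0 < h) : 0 ≤ gapLength E h :=
  le_csSup (gapLength_bddAbove E h) ⟨0, 0, le_rfl, le_rfl, hh.le, by simp, by simp⟩

lemma gapLength_le (E : Set ℝ) {h : ℝ} (hh : 0 < h) : gapLength E h ≤ h := by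
  refine csSup_le (gapLength_nonempty E hh) ?_
  rintro l ⟨a, b, ha, hab, hb, -, rfl⟩
  linarith

lemma eventually_gap_le_one (E : Set ℝ) :
    ∀ᶠ h in nhdsWithin (0 : ℝ) (Set.Ioi 0), gapLength E h / h ≤ 1 := by
  filter_upwards [self_mem_nhdsWithin] with h hh
  exact (div_le_one hh).2 (gapLength_le E hh)

lemma eventually_gap_nonneg (E : Set ℝ) :
    ∀ᶠ h in nhdsWithin (0 : ℝ) (Set.Ioi 0), 0 ≤ gapLength E h / h := by
  filter_upwards [self_mem_nhdsWithin] with h hh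
  exact div_nonneg (gapLength_nonneg E hh) (le_of_lt hh)

lemma upperPorosity_eq_one_iff (E : Set ℝ) : upperPorosity E = 1 ↔ HasBigGaps E := by
  have hbdd : IsBoundedUnder (· ≤ ·) (nhdsWithin (0 : ℝ) (Set.Ioi 0))
      (fun h => gapLength E h / h) := isBoundedUnder_of_eventually_le (eventually_gap_le_one E)
  have hbdd' : IsBoundedUnder (· ≥ ·) (nhdsWithin (0 : ℝ) (Set.Ioi 0))
      (fun h => gapLength E h / h) := isBoundedUnder_of_eventually_ge (eventually_gap_nonneg E)
  constructor
  · intro hE q hq δ hδ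
    have hq0 : 0 < q := by linarith
    set t : ℝ := 1 / (2 * q) with ht
    have ht0 : 0 < t := by positivity
    have htq : q * t = 1 / 2 := by rw [ht]; field_simp
    have hfreq : ∃ᶠ h in nhdsWithin (0 : ℝ) (Set.Ioi 0), 1 - t < gapLength E h / h := by
      refine frequently_lt_of_lt_limsup hbdd'.isCoboundedUnder_le ?_
      change 1 - t < upperPorosity E
      linarith
    obtain ⟨h, hlt, hh0, hhδ⟩ :=
      (hfreq.and_eventually (Ioo_mem_nhdsGT hδ : Set.Ioo 0 δ ∈ _)).exists
    rw [lt_div_iff₀ hh0] at hlt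
    obtain ⟨l, ⟨a, b, ha, hab, hb, hem, rfl⟩, hl⟩ :=
      exists_lt_of_lt_csSup (gapLength_nonempty E hh0) hlt
    have h1 : q * (t * h) = h / 2 := by rw [← mul_assoc, htq]; ring
    -- The gap `(a, b)` has `a < t h`, and `t ≤ 1 / 2` gives `b > (1 - t) h ≥ h / 2 = q (t h)`.
    have h2 : t * h ≤ h / 2 := by
      rw [← h1]; exact le_mul_of_one_le_left (by positivity) hq.le
    refine ⟨t * h, by positivity, by linarith, fun x hx hax => ?_⟩
    by_contra! hxb
    have : x ∈ Set.Ioo a b ∩ E := ⟨⟨by nlinarith, by nlinarith⟩, hx⟩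
    simp [hem] at this
  · intro hE
    apply le_antisymm
    · exact limsup_le_of_le hbdd'.isCoboundedUnder_le (eventually_gap_le_one E)
    · refine le_of_forall_lt fun c hc => ?_
      obtain ⟨s, hs, hs1⟩ := exists_between (max_lt hc zero_lt_one)
      have hs0 : 0 < s := (le_max_right _ _).trans_lt hs
      refine ((le_max_left _ _).trans_lt hs).trans_le ?_
      refine le_limsup_of_frequently_le ?_ hbdd
      rw [(nhdsGT_basis (0 : ℝ)).frequently_iff]
      intro δ hδ
      have hr : 0 < 1 - s := by linarith
      -- A gap of ratio `q = (1 - s)⁻¹` occupies the proportion `1 - q⁻¹ = s` of `(0, q a)`.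
      obtain ⟨a, ha, had, hgap⟩ := hE (1 - s)⁻¹ ((one_lt_inv₀ hr).2 (by linarith)) δ hδ
      have hpos : 0 < (1 - s)⁻¹ * a := by positivity
      refine ⟨(1 - s)⁻¹ * a, ⟨hpos, had⟩, ?_⟩
      rw [le_div_iff₀ hpos]
      have hsa : s * ((1 - s)⁻¹ * a) = (1 - s)⁻¹ * a - a := by field_simp; ring
      rw [hsa]
      refine le_csSup (gapLength_bddAbove E _) ⟨a, _, ha.le, ?_, le_rfl, ?_, rfl⟩
      · have : 0 < s * ((1 - s)⁻¹ * a) := by positivity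
        linarith
      · ext x
        simp only [Set.mem_inter_iff, Set.mem_Ioo, Set.mem_empty_iff_false, iff_false]
        rintro ⟨⟨h1, h2⟩, h3⟩
        exact absurd (hgap x h3 h1) (not_le.2 h2)

lemma not_hasBigGaps_Ici : ¬ HasBigGaps (Set.Ici 0) := by
  intro h
  obtain ⟨a, ha, -, hx⟩ := h 2 (by norm_num) 1 one_pos
  have := hx (3 / 2 * a) (by simp only [Set.mem_Ici]; positivity) (by linarith)
  linarith

lemma hasBigGaps_union {M : Set (Set ℝ)} (hM : IsMaximalIdealIn (Set.Ici 0) SP M)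
    {A C : Set ℝ} (hA : A ∈ M) (hC : C ∈ M) : HasBigGaps (A ∪ C) :=
  (upperPorosity_eq_one_iff _).1 (hM.2.1 (hM.1.2.2.2.1 A hA C hC)).2

/-- A set compatible with every member of an SP-maximal ideal belongs to it: otherwise the ideal
generated by the two would be a strictly larger ideal inside `SP`. -/
lemma mem_of_forall_union {M : Set (Set ℝ)} (hM : IsMaximalIdealIn (Set.Ici 0) SP M)
    {A : Set ℝ} (hA : A ⊆ Set.Ici 0) (h : ∀ C ∈ M, HasBigGaps (A ∪ C)) : A ∈ M := by
  obtain ⟨⟨⟨C₀, hC₀⟩, hsub, hdown, hun, hX⟩, hSP, hmax⟩ := hM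
  have hJX : ∀ B ∈ {B : Set ℝ | ∃ C ∈ M, B ⊆ A ∪ C}, B ⊆ Set.Ici 0 := by
    rintro B ⟨C, hC, hB⟩
    exact hB.trans (Set.union_subset hA (hsub C hC))
  have key : M = {B : Set ℝ | ∃ C ∈ M, B ⊆ A ∪ C} := by
    refine hmax _ ⟨⟨A, C₀, hC₀, Set.subset_union_left⟩, hJX, ?_, ?_, ?_⟩ ?_ ?_
    · rintro B ⟨C, hC, hB⟩ D hD
      exact ⟨C, hC, hD.trans hB⟩
    · rintro B ⟨C, hC, hB⟩ B' ⟨C', hC', hB'⟩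
      refine ⟨C ∪ C', hun C hC C' hC', Set.union_subset (hB.trans ?_) (hB'.trans ?_)⟩
      · exact Set.union_subset_union_right _ Set.subset_union_left
      · exact Set.union_subset_union_right _ Set.subset_union_right
    · rintro ⟨C, hC, hB⟩
      exact not_hasBigGaps_Ici ((h C hC).mono hB)
    · exact fun C hC => ⟨C, hC, Set.subset_union_right⟩
    · rintro B ⟨C, hC, hB⟩
      exact ⟨hJX B ⟨C, hC, hB⟩, (upperPorosity_eq_one_iff _).2 ((h C hC).mono hB)⟩
  rw [key]
  exact ⟨C₀, hC₀, Set.subset_union_left⟩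

lemma blowUp_mem {M : Set (Set ℝ)} (hM : IsMaximalIdealIn (Set.Ici 0) SP M)
    {A : Set ℝ} (hA : A ∈ M) {q : ℝ} (hq : 1 < q) : blowUp A q ∈ M := by
  have hq0 : 0 < q := by linarith
  refine mem_of_forall_union hM ?_ fun C hC r hr δ hδ => ?_
  · intro x hx
    simp only [blowUp, Set.mem_iUnion] at hx
    obtain ⟨y, hy, hxy, -⟩ := hx
    have hy0 : 0 ≤ y := hM.1.2.1 A hA hy
    exact (mul_nonneg (inv_pos.2 hq0).le hy0).trans hxy.le
  · -- A gap `(a, q² r a)` of `A ∪ C` leaves the gap `(q a, q r a)` of `blowUp A q ∪ C`.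
    obtain ⟨a, ha, had, hgap⟩ :=
      hasBigGaps_union hM hA hC (q * (q * r)) (by nlinarith [mul_pos hq0 hq0]) δ hδ
    have hqra : 0 < q * r * a := by positivity
    have hle : r * (q * a) ≤ q * (q * r) * a := by nlinarith
    refine ⟨q * a, by positivity, hle.trans_lt had, fun x hx hax => ?_⟩
    rcases hx with hx | hx
    · simp only [blowUp, Set.mem_iUnion] at hx
      obtain ⟨y, hy, hyx, hxy⟩ := hx
      have hay : a < y := lt_of_mul_lt_mul_left (hax.trans hxy) hq0.le
      have hbig := hgap y (Or.inl hy) hay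
      rw [inv_mul_lt_iff₀ hq0] at hyx
      have : q * (q * r * a) < q * x := by nlinarith
      have := lt_of_mul_lt_mul_left this hq0.le
      nlinarith
    · exact hle.trans (hgap x (Or.inr hx) (by nlinarith))

lemma zero_union_Ici_mem {M : Set (Set ℝ)} (hM : IsMaximalIdealIn (Set.Ici 0) SP M)
    {d : ℝ} (hd : 0 < d) : {0} ∪ Set.Ici d ∈ M := by
  refine mem_of_forall_union hM ?_ fun C hC q hq δ hδ => ?_
  · rintro x (rfl | hx)
    · exact Set.self_mem_Ici
    · exact hd.le.trans hx
  · obtain ⟨a, ha, had, hgap⟩ := hasBigGaps_union hM hC hC q hq (min δ d) (lt_min hδ hd)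
    refine ⟨a, ha, had.trans_le (min_le_left _ _), fun x hx hax => ?_⟩
    rcases hx with (rfl | hx) | hx
    · linarith
    · exact (had.trans_le (min_le_right _ _)).le.trans hx
    · exact hgap x (Or.inl hx) hax

theorem stmt15 (I₁ I₂ : Set (Set ℝ))
    (h₁ : IsMaximalIdealIn (Set.Ici 0) SP I₁)
    (h₂ : IsMaximalIdealIn (Set.Ici 0) SP I₂)
    (hne : I₁ ≠ I₂) :
    ∃ A ∈ I₁, Set.Ici 0 \ A ∈ I₂ := by
  obtain ⟨A, hA2, hA1⟩ : ∃ A ∈ I₂, A ∉ I₁ := by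
    by_contra! hcon
    exact hne (h₂.2.2 I₁ h₁.1 hcon h₁.2.1).symm
  obtain ⟨B, hB, hAB⟩ : ∃ B ∈ I₁, ¬ HasBigGaps (A ∪ B) := by
    by_contra! hcon
    exact hA1 (mem_of_forall_union h₁ (h₂.1.2.1 A hA2) hcon)
  unfold HasBigGaps at hAB
  push Not at hAB
  obtain ⟨q, hq, δ, hδ, hmeet⟩ := hAB
  have hq0 : 0 < q := by linarith
  refine ⟨({0} ∪ Set.Ici (δ / q)) ∪ blowUp B q,
    h₁.1.2.2.2.1 _ (zero_union_Ici_mem h₁ (by positivity)) _ (blowUp_mem h₁ hB hq),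
    h₂.1.2.2.1 _ (blowUp_mem h₂ hA2 hq) _ ?_⟩
  rintro x ⟨hx0, hx⟩
  simp only [Set.mem_union, Set.mem_singleton_iff, Set.mem_Ici, not_or, not_le] at hx
  obtain ⟨⟨hxne, hxd⟩, hxB⟩ := hx
  have hxpos : 0 < x := lt_of_le_of_ne hx0 (Ne.symm hxne)
  rw [lt_div_iff₀ hq0, mul_comm] at hxd
  obtain ⟨y, hy, hxy, hyx⟩ := hmeet x hxpos hxd
  -- A point `y` of `E` with `x < y < q x` puts `x` in `(y / q, q y)`.
  have hblow : ∀ E : Set ℝ, y ∈ E → x ∈ blowUp E q := by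
    intro E hE
    simp only [blowUp, Set.mem_iUnion]
    exact ⟨y, hE, (inv_mul_lt_iff₀ hq0).2 hyx, by nlinarith⟩
  rcases hy with hy | hy
  · exact hblow A hy
  · exact absurd (hblow B hy) hxB
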